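/- For each fixed α ∈ (0,1) and p ∈ (0,1), there exist constants A > 0 and C > 0 such that for all n ≥ 2: P( |F_n(α) − log_{1/√(pq)} n| ≥ A √(ln n) ) ≤ C/n. -/

import Mathlib

/-!
Partial fillup in tries (Janson–Szpankowski), Theorem 1 (two-point concentration
of the α-fillup level `F_n(α)`).

Model: an outcome `ω : ℕ → ℕ → Bool` encodes infinitely many strings, where
`ω i j` is the `j`-th bit of the `i`-th string; the measure `ν` makes all bits
i.i.d. with `P(bit = 1) = p`.  The trie on `n` strings uses strings `0,…,n-1`.
-/

open MeasureTheory ProbabilityTheory Real Filter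

/-- The number of strings among the first `n` (encoded in `ω`) whose first `k` bits
form the word `r ∈ {0,1}^k`. -/
def prefCount (ω : ℕ → ℕ → Bool) (n k : ℕ) (r : Fin k → Bool) : ℕ :=
  ((Finset.range n).filter fun i => ∀ j : Fin k, ω i j = r j).card

/-- `X_k`: the number of words `r ∈ {0,1}^k` that are prefixes of at least two of the
first `n` strings. -/
def fillCount (ω : ℕ → ℕ → Bool) (n k : ℕ) : ℕ :=
  (Finset.univ.filter fun r : Fin k → Bool => 2 ≤ prefCount ω n k r).card

/-- `X̄_k = X_k / 2^k`, the proportion of filled words at level `k`. -/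
noncomputable def fracFilled (ω : ℕ → ℕ → Bool) (n k : ℕ) : ℝ :=
  (fillCount ω n k : ℝ) / 2 ^ k

/-- The α-fillup level `F_n(α) = max {k : X̄_k ≥ α}`. -/
noncomputable def fillupLevel (α : ℝ) (ω : ℕ → ℕ → Bool) (n : ℕ) : ℕ :=
  sSup {k | α ≤ fracFilled ω n k}

/-- `ν` is a probability measure on `ℕ → ℕ → Bool` under which all the bits
`ω i j` are i.i.d. with `P(bit = 1) = p` (characterized by cylinder probabilities). -/
def IIDBits (p : ℝ) (ν : Measure (ℕ → ℕ → Bool)) : Prop :=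
  IsProbabilityMeasure ν ∧
    ∀ (S : Finset (ℕ × ℕ)) (b : ℕ × ℕ → Bool),
      ν {ω | ∀ s ∈ S, ω s.1 s.2 = b s} =
        ∏ s ∈ S, ENNReal.ofReal (if b s then p else 1 - p)

/-!
For a word `r` of length `k` with probability `P(r)`, the sum of the bits of `r` read as signs is
at most of order `√k` for all but a small proportion of the words, by Chebyshev's inequality for
*uniformly* chosen words.  For these typical words `-log P(r) = k μ + O(√k)` with
`μ = -(log p + log q) / 2`, so the expected number `n P(r)` of strings with prefix `r` crosses `1`
at `k = log n / μ = log_{1/√(pq)} n`, within a window of width `O(√(log n))`.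
Above the window `n P(r)` is small for every typical `r`, and a Chernoff bound for the number of
strings whose prefix is typical shows that few words are filled.  Below the window
`n P(r) ≥ 4 log n`, and a Chernoff bound for each typical `r` together with a union bound
shows that all typical words are filled.
-/

section Words

variable {p δ : ℝ} {k : ℕ}

/-- The probability `P(r)` that a random string has `r` as a prefix. -/
def wordProb (p : ℝ) (r : Fin k → Bool) : ℝ :=
  ∏ j, if r j then p else 1 - p

/-- The number of ones minus the number of zeros in a word. -/
def bitSum (r : Fin k → Bool) : ℝ :=
  ∑ j, if r j then 1 else -1

/-- The mean `-(log p + log (1 - p)) / 2` of the surprisal `-log P(bit)` of a *uniform* bit, written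
so that `log_{1/√(pq)} n` is `log n / meanSurprisal p` by definition. -/
noncomputable def meanSurprisal (p : ℝ) : ℝ :=
  log (1 / √(p * (1 - p)))

/-- The standard deviation of the surprisal `-log P(bit)` of a *uniform* bit. -/
noncomputable def surprisalDeviation (p : ℝ) : ℝ :=
  |(log p - log (1 - p)) / 2|

/-- The words of length `k` whose imbalance between ones and zeros is at most `√(k / δ)`.  By
Chebyshev's inequality they are all words up to a proportion `δ`. -/
noncomputable def typicalWords (δ : ℝ) (k : ℕ) : Finset (Fin k → Bool) :=
  {r | δ * bitSum r ^ 2 ≤ k}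

lemma wordProb_nonneg (hp : p ∈ Set.Icc 0 1) (r : Fin k → Bool) : 0 ≤ wordProb p r :=
  Finset.prod_nonneg fun j _ => by split_ifs <;> linarith [hp.1, hp.2]

lemma wordProb_pos (hp : p ∈ Set.Ioo 0 1) (r : Fin k → Bool) : 0 < wordProb p r :=
  Finset.prod_pos fun j _ => by split_ifs <;> linarith [hp.1, hp.2]

lemma sum_wordProb (p : ℝ) (k : ℕ) : ∑ r : Fin k → Bool, wordProb p r = 1 := by
  simp only [wordProb, ← Fintype.sum_pow fun b : Bool => if b then p else 1 - p]
  simp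

lemma sum_bitSum_sq (k : ℕ) : ∑ r : Fin k → Bool, bitSum r ^ 2 = k * 2 ^ k := by
  induction k with
  | zero => simp [bitSum]
  | succ k ih =>
    have bitSum_cons (b : Bool) (r : Fin k → Bool) :
        bitSum (Fin.cons b r : Fin (k + 1) → Bool) = (if b then 1 else -1) + bitSum r := by
      simp [bitSum, Fin.sum_univ_succ]
    calc ∑ r : Fin (k + 1) → Bool, bitSum r ^ 2
        = ∑ r : Fin k → Bool, ((1 + bitSum r) ^ 2 + (-1 + bitSum r) ^ 2) := by
          rw [← (Fin.consEquiv fun _ => Bool).sum_comp, Fintype.sum_prod_type, Fintype.sum_bool,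
            ← Finset.sum_add_distrib]
          simp [Fin.consEquiv, bitSum_cons]
      _ = ∑ r : Fin k → Bool, (2 + 2 * bitSum r ^ 2) := by congr! 1; ring
      _ = (k + 1 : ℕ) * 2 ^ (k + 1) := by
          rw [Finset.sum_add_distrib, ← Finset.mul_sum, ih]
          simp
          ring

lemma card_compl_typicalWords_le (hδ : 0 ≤ δ) (k : ℕ) :
    ((typicalWords δ k)ᶜ.card : ℝ) ≤ δ * 2 ^ k := by
  rcases k.eq_zero_or_pos with rfl | hk
  · have hall : typicalWords δ 0 = Finset.univ := by simp [typicalWords, bitSum]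
    rw [hall, Finset.compl_univ]
    simpa using hδ
  have markov : ((typicalWords δ k)ᶜ.card : ℝ) * k ≤ δ * (k * 2 ^ k) :=
    calc ((typicalWords δ k)ᶜ.card : ℝ) * k
        ≤ ∑ r ∈ (typicalWords δ k)ᶜ, δ * bitSum r ^ 2 := by
          rw [← nsmul_eq_mul]
          refine Finset.card_nsmul_le_sum _ _ _ fun r hr => ?_
          have hlt : k < δ * bitSum r ^ 2 := by simpa [typicalWords] using hr
          exact hlt.le
      _ ≤ ∑ r, δ * bitSum r ^ 2 := Finset.sum_le_univ_sum_of_nonneg fun r => by positivity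
      _ = δ * (k * 2 ^ k) := by rw [← Finset.mul_sum, sum_bitSum_sq]
  refine le_of_mul_le_mul_right (markov.trans_eq (by ring)) (Nat.cast_pos.2 hk)

lemma meanSurprisal_eq (hp : p ∈ Set.Ioo 0 1) :
    meanSurprisal p = -((log p + log (1 - p)) / 2) := by
  have hq : 0 < 1 - p := sub_pos.2 hp.2
  rw [meanSurprisal, one_div, log_inv, log_sqrt (mul_pos hp.1 hq).le,
    log_mul hp.1.ne' hq.ne']

lemma log_two_le_meanSurprisal (hp : p ∈ Set.Ioo 0 1) : log 2 ≤ meanSurprisal p := by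
  have hpq : 0 < p * (1 - p) := mul_pos hp.1 (sub_pos.2 hp.2)
  refine log_le_log two_pos ?_
  rw [le_one_div two_pos (sqrt_pos.2 hpq), sqrt_le_left (by norm_num)]
  nlinarith [sq_nonneg (p - 1 / 2)]

lemma meanSurprisal_pos (hp : p ∈ Set.Ioo 0 1) : 0 < meanSurprisal p :=
  (log_pos one_lt_two).trans_le (log_two_le_meanSurprisal hp)

lemma log_wordProb (hp : p ∈ Set.Ioo 0 1) (r : Fin k → Bool) :
    log (wordProb p r) = -(k * meanSurprisal p) + (log p - log (1 - p)) / 2 * bitSum r := by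
  have log_bit (b : Bool) : log (if b then p else 1 - p) =
      -meanSurprisal p + (log p - log (1 - p)) / 2 * (if b then 1 else -1) := by
    rw [meanSurprisal_eq hp]
    cases b <;> simp <;> ring
  rw [wordProb, log_prod fun j _ => by split_ifs <;> linarith [hp.1, hp.2]]
  simp only [log_bit, Finset.sum_add_distrib, ← Finset.mul_sum, bitSum]
  simp

lemma abs_log_wordProb_add_le (hp : p ∈ Set.Ioo 0 1) (hδ : 0 < δ) {r : Fin k → Bool}
    (hr : r ∈ typicalWords δ k) :
    |log (wordProb p r) + k * meanSurprisal p| ≤ surprisalDeviation p / √δ * √k := by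
  have hbit : |bitSum r| ≤ √(k / δ) := by
    refine abs_le_sqrt ((le_div_iff₀' hδ).2 ?_)
    simpa [typicalWords] using hr
  rw [log_wordProb hp, neg_add_cancel_comm, abs_mul, ← surprisalDeviation, div_mul_eq_mul_div,
    mul_div_assoc, ← sqrt_div' _ hδ.le]
  gcongr
  exact abs_nonneg _

end Words

section Counting

variable {α : ℝ} {k : ℕ}

/-- The length-`k` prefixes of the first `n` strings, as an element of a finite type. -/
def prefixes (n k : ℕ) (ω : ℕ → ℕ → Bool) : Fin n → Fin k → Bool :=
  fun i j => ω i j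

lemma measurable_prefixes (n k : ℕ) : Measurable (prefixes n k) := by
  unfold prefixes
  fun_prop

lemma sum_prefCount (ω : ℕ → ℕ → Bool) (n : ℕ) (W : Finset (Fin k → Bool)) :
    ∑ r ∈ W, prefCount ω n k r = ∑ i, if prefixes n k ω i ∈ W then 1 else 0 := by
  simp only [prefCount, Finset.card_filter]
  rw [Finset.sum_comm, Finset.sum_range]
  refine Finset.sum_congr rfl fun i _ => ?_
  rw [← Finset.sum_ite_eq W (prefixes n k ω i) fun _ => 1]
  simp only [prefixes, funext_iff]

lemma fillCount_le_card_compl_add (ω : ℕ → ℕ → Bool) (n : ℕ) (W : Finset (Fin k → Bool)) :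
    fillCount ω n k ≤ Wᶜ.card + ∑ r ∈ W, prefCount ω n k r := by
  have hsub : ({r | 2 ≤ prefCount ω n k r} : Finset (Fin k → Bool)) ⊆
      Wᶜ ∪ {r ∈ W | 2 ≤ prefCount ω n k r} := fun r hr => by
    by_cases hW : r ∈ W <;> simp_all
  refine (Finset.card_le_card hsub).trans ((Finset.card_union_le _ _).trans ?_)
  gcongr
  rw [Finset.card_filter]
  exact Finset.sum_le_sum fun r _ => by split_ifs <;> omega

lemma fillCount_le (ω : ℕ → ℕ → Bool) (n k : ℕ) : fillCount ω n k ≤ n := by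
  simpa [sum_prefCount] using fillCount_le_card_compl_add (k := k) ω n Finset.univ

lemma prefCount_le_prefCount_init (ω : ℕ → ℕ → Bool) (n : ℕ) (r : Fin (k + 1) → Bool) :
    prefCount ω n (k + 1) r ≤ prefCount ω n k (Fin.init r) :=
  Finset.card_le_card <| Finset.monotone_filter_right _ fun _ _ h j => h j.castSucc

lemma fillCount_succ_le (ω : ℕ → ℕ → Bool) (n k : ℕ) :
    fillCount ω n (k + 1) ≤ 2 * fillCount ω n k :=
  calc fillCount ω n (k + 1)
      ≤ ((Finset.univ : Finset Bool) ×ˢ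
          ({r | 2 ≤ prefCount ω n k r} : Finset (Fin k → Bool))).card := by
        refine Finset.card_le_card_of_injOn (Fin.snocEquiv fun _ => Bool).symm (fun r hr => ?_)
          (Equiv.injective _).injOn
        simpa [Fin.snocEquiv] using (Finset.mem_filter.1 hr).2.trans
          (prefCount_le_prefCount_init ω n r)
    _ = 2 * fillCount ω n k := by simp [fillCount]

lemma antitone_fracFilled (ω : ℕ → ℕ → Bool) (n : ℕ) : Antitone (fracFilled ω n) := by
  refine antitone_nat_of_succ_le fun k => ?_
  rw [fracFilled, fracFilled, div_le_iff₀ (by positivity), pow_succ', ← mul_assoc, mul_right_comm,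
    div_mul_cancel₀ _ (by positivity), mul_comm]
  exact_mod_cast fillCount_succ_le ω n k

lemma bddAbove_setOf_le_fracFilled (hα : 0 < α) (ω : ℕ → ℕ → Bool) (n : ℕ) :
    BddAbove {k | α ≤ fracFilled ω n k} := by
  refine ⟨⌈n / α⌉₊, fun k hk => ?_⟩
  have hfill : α * 2 ^ k ≤ fillCount ω n k := (le_div_iff₀ (by positivity)).1 hk
  have hpow : (2 : ℝ) ^ k ≤ n / α :=
    (le_div_iff₀' hα).2 (hfill.trans (Nat.cast_le.2 (fillCount_le ω n k)))
  have hk_pow : (k : ℝ) ≤ 2 ^ k := by exact_mod_cast Nat.lt_two_pow_self.le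
  exact Nat.cast_le.1 ((hk_pow.trans hpow).trans (Nat.le_ceil _))

/-- The exclusion of `k = 0` accounts for `fillupLevel` being `sSup ∅ = 0` when no level is filled
to the proportion `α`. -/
lemma le_fillupLevel_iff (hα : 0 < α) (hk : k ≠ 0) (ω : ℕ → ℕ → Bool) (n : ℕ) :
    k ≤ fillupLevel α ω n ↔ α ≤ fracFilled ω n k := by
  refine ⟨fun h => ?_, fun h => le_csSup (bddAbove_setOf_le_fracFilled hα ω n) h⟩
  have hne : {k | α ≤ fracFilled ω n k}.Nonempty := by
    by_contra! hempty
    simp [fillupLevel, hempty, hk] at h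
  have hmem : α ≤ fracFilled ω n (fillupLevel α ω n) :=
    Nat.sSup_mem hne (bddAbove_setOf_le_fracFilled hα ω n)
  exact hmem.trans (antitone_fracFilled ω n h)

end Counting

namespace IIDBits

variable {p : ℝ} {ν : Measure (ℕ → ℕ → Bool)}

lemma mem_Icc (hν : IIDBits p ν) : p ∈ Set.Icc 0 1 := by
  have := hν.1
  have bit_le_one (b : Bool) : (if b then p else 1 - p) ≤ 1 := by
    have hbit := hν.2 {(0, 0)} fun _ => b
    rw [Finset.prod_singleton] at hbit
    exact ENNReal.ofReal_le_one.1 (hbit ▸ prob_le_one)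
  have hone : p ≤ 1 := by simpa using bit_le_one true
  have hzero : 1 - p ≤ 1 := by simpa using bit_le_one false
  exact ⟨by linarith, hone⟩

lemma measureReal_prefixes_preimage (hν : IIDBits p ν) {n k : ℕ} (x : Fin n → Fin k → Bool) :
    ν.real (prefixes n k ⁻¹' {x}) = ∏ i, wordProb p (x i) := by
  let b : ℕ × ℕ → Bool := fun s =>
    if h : s.1 < n ∧ s.2 < k then x ⟨s.1, h.1⟩ ⟨s.2, h.2⟩ else true
  have hcyl : prefixes n k ⁻¹' {x} =
      {ω | ∀ s ∈ Finset.range n ×ˢ Finset.range k, ω s.1 s.2 = b s} := by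
    ext ω
    simp only [Set.mem_preimage, Set.mem_singleton_iff, funext_iff, prefixes, Set.mem_ofPred_eq,
      Finset.mem_product, Finset.mem_range, Prod.forall]
    constructor
    · intro h i j hij
      simpa [b, hij.1, hij.2] using h ⟨i, hij.1⟩ ⟨j, hij.2⟩
    · intro h i j
      simp [h i j ⟨i.2, j.2⟩, b]
  have hbit (b : Bool) : 0 ≤ if b then p else 1 - p := by
    split_ifs <;> linarith [hν.mem_Icc.1, hν.mem_Icc.2]
  simp only [measureReal_def, hcyl, hν.2, ENNReal.toReal_prod, ENNReal.toReal_ofReal (hbit _),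
    Finset.prod_product, Finset.prod_range, wordProb]
  simp [b]

lemma integrable_comp_prefixes (hν : IIDBits p ν) {n k : ℕ} (f : (Fin n → Fin k → Bool) → ℝ) :
    Integrable (fun ω => f (prefixes n k ω)) ν :=
  have := hν.1
  Integrable.of_finite.comp_measurable (measurable_prefixes n k)

lemma integral_prod_prefixes (hν : IIDBits p ν) (n : ℕ) {k : ℕ} (g : (Fin k → Bool) → ℝ) :
    ∫ ω, ∏ i, g (prefixes n k ω i) ∂ν = (∑ r, wordProb p r * g r) ^ n := by
  have := hν.1
  have hmeas := measurable_prefixes n k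
  calc ∫ ω, ∏ i, g (prefixes n k ω i) ∂ν
      = ∫ x, ∏ i, g (x i) ∂ν.map (prefixes n k) :=
        (integral_map (f := fun x => ∏ i, g (x i)) hmeas.aemeasurable .of_discrete).symm
    _ = ∑ x : Fin n → Fin k → Bool, ∏ i, wordProb p (x i) * g (x i) := by
        rw [integral_fintype .of_finite]
        simp only [map_measureReal_apply hmeas (measurableSet_singleton _),
          hν.measureReal_prefixes_preimage, smul_eq_mul, Finset.prod_mul_distrib]
    _ = (∑ r, wordProb p r * g r) ^ n := (Fintype.sum_pow (fun r => wordProb p r * g r) n).symm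

lemma mgf_sum_prefCount_le (hν : IIDBits p ν) (n : ℕ) {k : ℕ} (W : Finset (Fin k → Bool)) (t : ℝ) :
    mgf (fun ω => ((∑ r ∈ W, prefCount ω n k r : ℕ) : ℝ)) ν t ≤
      exp ((exp t - 1) * (n * ∑ r ∈ W, wordProb p r)) := by
  have word_mgf : ∑ r, wordProb p r * exp (t * if r ∈ W then 1 else 0) =
      1 + (exp t - 1) * ∑ r ∈ W, wordProb p r := by
    have hterm (r : Fin k → Bool) : wordProb p r * exp (t * if r ∈ W then 1 else 0) =
        wordProb p r + (exp t - 1) * if r ∈ W then wordProb p r else 0 := by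
      split_ifs
      · ring_nf
      · simp
    simp only [hterm, Finset.sum_add_distrib, ← Finset.mul_sum, sum_wordProb]
    simp
  calc mgf (fun ω => ((∑ r ∈ W, prefCount ω n k r : ℕ) : ℝ)) ν t
      = ∫ ω, ∏ i, exp (t * if prefixes n k ω i ∈ W then 1 else 0) ∂ν := by
        simp only [mgf, sum_prefCount, ← exp_sum, ← Finset.mul_sum]
        push_cast
        rfl
    _ = (1 + (exp t - 1) * ∑ r ∈ W, wordProb p r) ^ n := by
        rw [hν.integral_prod_prefixes n fun r => exp (t * if r ∈ W then 1 else 0), word_mgf]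
    _ ≤ exp ((exp t - 1) * ∑ r ∈ W, wordProb p r) ^ n := by
        refine pow_le_pow_left₀ ?_ ?_ n
        · rw [← word_mgf]
          exact Finset.sum_nonneg fun r _ =>
            mul_nonneg (wordProb_nonneg hν.mem_Icc r) (exp_nonneg _)
        · rw [add_comm]
          exact add_one_le_exp _
    _ = exp ((exp t - 1) * (n * ∑ r ∈ W, wordProb p r)) := by
        rw [← exp_nat_mul]
        ring_nf

lemma integrable_exp_mul_sum_prefCount (hν : IIDBits p ν) (n : ℕ) {k : ℕ}
    (W : Finset (Fin k → Bool)) (t : ℝ) :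
    Integrable (fun ω => exp (t * (∑ r ∈ W, prefCount ω n k r : ℕ))) ν := by
  simp only [sum_prefCount]
  exact hν.integrable_comp_prefixes fun x => exp (t * (∑ i, if x i ∈ W then 1 else 0 : ℕ))

lemma measureReal_le_fracFilled_le (hν : IIDBits p ν) {δ : ℝ} {n k : ℕ} {W : Finset (Fin k → Bool)}
    (hW : (Wᶜ.card : ℝ) ≤ δ * 2 ^ k) (hrare : ∀ r ∈ W, n * wordProb p r ≤ δ / 4) :
    ν.real {ω | 2 * δ ≤ fracFilled ω n k} ≤ exp (-(δ / 2 * 2 ^ k)) := by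
  have := hν.1
  have hδ : 0 ≤ δ := nonneg_of_mul_nonneg_left ((Nat.cast_nonneg _).trans hW) (by positivity)
  have hsub : {ω | 2 * δ ≤ fracFilled ω n k} ⊆
      {ω | δ * 2 ^ k ≤ (∑ r ∈ W, prefCount ω n k r : ℕ)} := fun ω hω => by
    have hfill : 2 * δ * 2 ^ k ≤ fillCount ω n k := (le_div_iff₀ (by positivity)).1 hω
    have hcount : (fillCount ω n k : ℝ) ≤ Wᶜ.card + (∑ r ∈ W, prefCount ω n k r : ℕ) := by
      exact_mod_cast fillCount_le_card_compl_add ω n W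
    rw [Set.mem_ofPred_eq]
    linarith
  have hmean : n * ∑ r ∈ W, wordProb p r ≤ 2 ^ k * (δ / 4) := by
    rw [Finset.mul_sum]
    refine (Finset.sum_le_card_nsmul W _ _ hrare).trans ?_
    rw [nsmul_eq_mul]
    gcongr
    exact_mod_cast (Finset.card_le_univ W).trans_eq (by simp)
  calc ν.real {ω | 2 * δ ≤ fracFilled ω n k}
      ≤ ν.real {ω | δ * 2 ^ k ≤ (∑ r ∈ W, prefCount ω n k r : ℕ)} := measureReal_mono hsub
    _ ≤ exp (-1 * (δ * 2 ^ k)) * exp ((exp 1 - 1) * (n * ∑ r ∈ W, wordProb p r)) :=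
        (measure_ge_le_exp_mul_mgf _ zero_le_one
          (hν.integrable_exp_mul_sum_prefCount n W 1)).trans
          (by gcongr; exact hν.mgf_sum_prefCount_le n W 1)
    _ ≤ exp (-1 * (δ * 2 ^ k)) * exp (2 * (2 ^ k * (δ / 4))) := by
        have hmean_nonneg : 0 ≤ n * ∑ r ∈ W, wordProb p r :=
          mul_nonneg n.cast_nonneg (Finset.sum_nonneg fun r _ => wordProb_nonneg hν.mem_Icc r)
        gcongr
        linarith [exp_one_lt_d9]
    _ = exp (-(δ / 2 * 2 ^ k)) := by
        rw [← exp_add]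
        ring_nf

lemma measureReal_prefCount_le_one_le (hν : IIDBits p ν) (n : ℕ) {k : ℕ} (r : Fin k → Bool) :
    ν.real {ω | prefCount ω n k r ≤ 1} ≤ exp (1 - n * wordProb p r / 2) := by
  have := hν.1
  have chernoff := (measure_le_le_exp_mul_mgf 1 (neg_nonpos.2 zero_le_one)
    (hν.integrable_exp_mul_sum_prefCount n {r} (-1))).trans
    (mul_le_mul_of_nonneg_left (hν.mgf_sum_prefCount_le n {r} (-1)) (exp_nonneg _))
  simp only [Finset.sum_singleton, Nat.cast_le_one] at chernoff
  refine chernoff.trans ?_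
  rw [← exp_add]
  gcongr
  have hmean : 0 ≤ n * wordProb p r := mul_nonneg n.cast_nonneg (wordProb_nonneg hν.mem_Icc r)
  have hexp : exp (-1) - 1 ≤ -(1 / 2) := by linarith [exp_neg_one_lt_d9]
  linarith [mul_le_mul_of_nonneg_right hexp hmean]

lemma measureReal_fracFilled_lt_le (hν : IIDBits p ν) {δ m : ℝ} {n k : ℕ}
    {W : Finset (Fin k → Bool)} (hW : (Wᶜ.card : ℝ) ≤ δ * 2 ^ k)
    (hfreq : ∀ r ∈ W, m ≤ n * wordProb p r) :
    ν.real {ω | fracFilled ω n k < 1 - δ} ≤ 2 ^ k * exp (1 - m / 2) := by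
  have := hν.1
  have card_words : Fintype.card (Fin k → Bool) = 2 ^ k := by simp
  have hsub : {ω | fracFilled ω n k < 1 - δ} ⊆ ⋃ r ∈ W, {ω | prefCount ω n k r ≤ 1} := by
    intro ω hω
    by_contra hfilled
    simp only [Set.mem_iUnion, Set.mem_ofPred_eq, not_exists, not_le] at hfilled
    have hcard : W.card ≤ fillCount ω n k :=
      Finset.card_le_card fun r hr => Finset.mem_filter.2 ⟨Finset.mem_univ r, hfilled r hr⟩
    have hsplit : (W.card : ℝ) + Wᶜ.card = 2 ^ k := by
      exact_mod_cast (Finset.card_add_card_compl W).trans card_words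
    have hfew : (fillCount ω n k : ℝ) < (1 - δ) * 2 ^ k := (div_lt_iff₀ (by positivity)).1 hω
    linarith [(Nat.cast_le (α := ℝ)).2 hcard]
  calc ν.real {ω | fracFilled ω n k < 1 - δ}
      ≤ ν.real (⋃ r ∈ W, {ω | prefCount ω n k r ≤ 1}) :=
        measureReal_mono hsub (measure_ne_top _ _)
    _ ≤ ∑ r ∈ W, ν.real {ω | prefCount ω n k r ≤ 1} := measureReal_biUnion_finset_le _ _
    _ ≤ ∑ _r ∈ W, exp (1 - m / 2) := Finset.sum_le_sum fun r hr =>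
        (hν.measureReal_prefCount_le_one_le n r).trans (by gcongr; exact hfreq r hr)
    _ ≤ 2 ^ k * exp (1 - m / 2) := by
        rw [Finset.sum_const, nsmul_eq_mul]
        gcongr
        exact_mod_cast (Finset.card_le_univ W).trans_eq card_words

end IIDBits

section Window

lemma one_half_le_sqrt_log {x : ℝ} (hx : 2 ≤ x) : 1 / 2 ≤ √(log x) := by
  refine le_sqrt_of_sq_le ?_
  linarith [log_two_gt_d9, log_le_log two_pos hx]

/-- With `s = √(log n)` and `l = meanSurprisal p`, the left-hand side bounds `log (n P(r))` from
above for typical words `r` of length `x`. -/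
lemma exists_forall_sq_sub_add_sqrt_le {l M : ℝ} (hl : 0 < l) (hM : 0 ≤ M) (B : ℝ) :
    ∃ A > 0, ∀ s x : ℝ, 1 / 2 ≤ s → s ^ 2 / l + A * s ≤ x → s ^ 2 - x * l + M * √x ≤ B := by
  set m := M / √l
  have hm : 0 ≤ m := by positivity
  set D := m + |B| + 1
  have hD_nonneg : 0 ≤ D := by positivity
  refine ⟨(2 * D + 2 * D ^ 2) / l, by positivity, fun s x hs hx => ?_⟩
  have hx0 : 0 ≤ x := le_trans (by positivity) hx
  have hxl : s ^ 2 + (2 * D + 2 * D ^ 2) * s ≤ x * l := by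
    rwa [div_mul_eq_mul_div, ← add_div, div_le_iff₀ hl] at hx
  set w := √(x * l)
  have hw_sq : w ^ 2 = x * l := sq_sqrt (by positivity)
  have hw : s + D ≤ w := le_sqrt_of_sq_le <|
    calc (s + D) ^ 2 = s ^ 2 + 2 * D * s + D ^ 2 * 1 := by ring
      _ ≤ s ^ 2 + 2 * D * s + D ^ 2 * (2 * s) := by gcongr; linarith
      _ ≤ x * l := by linarith
  have hMx : M * √x = m * w := by
    simp only [m, w, sqrt_mul hx0]
    field_simp
  have hB : -B ≤ |B| := neg_le_abs B
  calc s ^ 2 - x * l + M * √x = s ^ 2 - w * (w - m) := by rw [hMx, ← hw_sq]; ring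
    _ ≤ s ^ 2 - (s + D) * (s + D - m) := by
        gcongr
        linarith [abs_nonneg B]
    _ = -(s * (2 * D - m) + D * (D - m)) := by ring
    _ ≤ B := by
        have hs_mul : 0 ≤ s * (2 * D - m) := mul_nonneg (by linarith) (by linarith [abs_nonneg B])
        have hD_mul : D ≤ D * (D - m) :=
          le_mul_of_one_le_right hD_nonneg (by linarith [abs_nonneg B])
        linarith

lemma exists_forall_le_sq_sub_sub_sqrt {l M : ℝ} (hl : 0 < l) (hM : 0 ≤ M) (D : ℝ) :
    ∃ A > 0, ∀ s x : ℝ, 1 / 2 ≤ s → x ≤ s ^ 2 / l - A * s + 1 →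
      D * s ≤ s ^ 2 - x * l - M * √x := by
  set m := M / √l
  have : 0 ≤ m := by positivity
  refine ⟨2 + (m + |D|) / l, by positivity, fun s x hs hx => ?_⟩
  have hm_s : 0 ≤ (m + |D|) / l * s := by positivity
  have hMx : M * √x ≤ m * s :=
    calc M * √x ≤ M * √(s ^ 2 / l) := by gcongr; linarith
      _ = m * s := by
        rw [sqrt_div (sq_nonneg s), sqrt_sq (by linarith), mul_div_assoc', div_mul_eq_mul_div]
  have hxl : x * l ≤ s ^ 2 - 2 * s * l - (m + |D|) * s + l :=
    calc x * l ≤ (s ^ 2 / l - (2 + (m + |D|) / l) * s + 1) * l := by gcongr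
      _ = s ^ 2 - 2 * s * l - (m + |D|) * s + l := by field_simp; ring
  have hl_s : l ≤ 2 * s * l := le_mul_of_one_le_left hl.le (by linarith)
  have hD_s : D * s ≤ |D| * s := by gcongr; exact le_abs_self D
  linarith

lemma exists_forall_exp_neg_mul_two_pow_le {c : ℝ} (hc : 0 < c) (l : ℝ) :
    ∃ C > 0, ∀ (x : ℝ) (k : ℕ), 0 < x → x ≤ exp (k * l) → exp (-(c * 2 ^ k)) ≤ C / x := by
  obtain ⟨m, hm⟩ := exists_nat_ge (l / log 2)
  rw [div_le_iff₀ (log_pos one_lt_two)] at hm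
  refine ⟨m.factorial / c ^ m, by positivity, fun x k hx hxk => ?_⟩
  have hx_pow : x ≤ (2 ^ k) ^ m :=
    calc x ≤ exp (k * l) := hxk
      _ ≤ exp (k * (m * log 2)) := by gcongr
      _ = (2 ^ k) ^ m := by
        rw [mul_left_comm, exp_nat_mul, exp_nat_mul, exp_log two_pos]
  rw [exp_neg, inv_le_comm₀ (exp_pos _) (by positivity), inv_div]
  calc x / (m.factorial / c ^ m) = c ^ m * x / m.factorial := by field_simp
    _ ≤ c ^ m * (2 ^ k) ^ m / m.factorial := by gcongr
    _ = (c * 2 ^ k) ^ m / m.factorial := by rw [mul_pow]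
    _ ≤ exp (c * 2 ^ k) := pow_div_factorial_le_exp _ (by positivity) m

lemma exists_forall_mul_wordProb_le {p δ ε : ℝ} (hp : p ∈ Set.Ioo 0 1) (hδ : 0 < δ) (hε : 0 < ε) :
    ∃ A > 0, ∀ n k : ℕ, 2 ≤ n → logb (1 / √(p * (1 - p))) n + A * √(log n) ≤ k →
      ∀ r ∈ typicalWords δ k, n * wordProb p r ≤ ε := by
  have hM : 0 ≤ surprisalDeviation p / √δ := div_nonneg (abs_nonneg _) (sqrt_nonneg _)
  obtain ⟨A, hA, hwindow⟩ := exists_forall_sq_sub_add_sqrt_le (meanSurprisal_pos hp) hM (log ε)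
  refine ⟨A, hA, fun n k hn hk r hr => ?_⟩
  have hn0 : (0 : ℝ) < n := by positivity
  have hr0 := wordProb_pos hp r
  have hs_sq : √(log n) ^ 2 = log n := sq_sqrt (log_natCast_nonneg n)
  have hmargin := hwindow √(log n) k (one_half_le_sqrt_log (by exact_mod_cast hn))
    (by rwa [hs_sq])
  rw [← log_le_log_iff (by positivity) hε, log_mul hn0.ne' hr0.ne', ← hs_sq]
  linarith [(abs_le.1 (abs_log_wordProb_add_le hp hδ hr)).2]

lemma exists_forall_two_pow_le_and_le_mul_wordProb {p δ : ℝ} (hp : p ∈ Set.Ioo 0 1) (hδ : 0 < δ) :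
    ∃ A > 0, ∀ n k : ℕ, 2 ≤ n → k ≤ logb (1 / √(p * (1 - p))) n - A * √(log n) + 1 →
      (2 : ℝ) ^ k ≤ n ∧ ∀ r ∈ typicalWords δ k, 4 * log n ≤ n * wordProb p r := by
  have hM : 0 ≤ surprisalDeviation p / √δ := div_nonneg (abs_nonneg _) (sqrt_nonneg _)
  obtain ⟨A, hA, hwindow⟩ := exists_forall_le_sq_sub_sub_sqrt (meanSurprisal_pos hp) hM 3
  refine ⟨A, hA, fun n k hn hk => ?_⟩
  have hn0 : (0 : ℝ) < n := by positivity
  set s := √(log n)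
  have hs_sq : s ^ 2 = log n := sq_sqrt (log_natCast_nonneg n)
  have hmargin := hwindow s k (one_half_le_sqrt_log (by exact_mod_cast hn)) (by rwa [hs_sq])
  constructor
  · have hsqrt : 0 ≤ surprisalDeviation p / √δ * √k := by positivity
    rw [← log_le_log_iff (by positivity) hn0, log_pow, ← hs_sq]
    calc k * log 2 ≤ k * meanSurprisal p := by gcongr; exact log_two_le_meanSurprisal hp
      _ ≤ s ^ 2 := by linarith [sqrt_nonneg (log n)]
  · intro r hr
    have hr0 := wordProb_pos hp r
    calc 4 * log n ≤ 1 + 3 * s + (3 * s) ^ 2 / 2 := by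
          rw [← hs_sq]
          nlinarith [sq_nonneg s, sqrt_nonneg (log n)]
      _ ≤ exp (3 * s) := quadratic_le_exp_of_nonneg (by positivity)
      _ ≤ n * wordProb p r := by
        rw [← le_log_iff_exp_le (by positivity), log_mul hn0.ne' hr0.ne', ← hs_sq]
        linarith [(abs_le.1 (abs_log_wordProb_add_le hp hδ hr)).1]

end Window

namespace IIDBits

variable {p α : ℝ} {ν : Measure (ℕ → ℕ → Bool)}

theorem exists_fillupLevel_upper_tail (hν : IIDBits p ν) (hp : p ∈ Set.Ioo 0 1) (hα : 0 < α) :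
    ∃ A > 0, ∃ C > 0, ∀ n : ℕ, 2 ≤ n →
      ν.real {ω | logb (1 / √(p * (1 - p))) n + A * √(log n) ≤ fillupLevel α ω n} ≤ C / n := by
  have := hν.1
  have hδ : 0 < α / 2 := half_pos hα
  obtain ⟨A, hA, hrare⟩ := exists_forall_mul_wordProb_le hp hδ (show 0 < α / 2 / 4 by positivity)
  obtain ⟨C, hC, hdecay⟩ :=
    exists_forall_exp_neg_mul_two_pow_le (half_pos hδ) (meanSurprisal p)
  refine ⟨A, hA, C, hC, fun n hn => ?_⟩
  have hn0 : (0 : ℝ) < n := by positivity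
  have hlog : 0 < log n := log_pos (by exact_mod_cast hn)
  have hL : 0 < logb (1 / √(p * (1 - p))) n := div_pos hlog (meanSurprisal_pos hp)
  set k := ⌈logb (1 / √(p * (1 - p))) n + A * √(log n)⌉₊
  have hk : logb (1 / √(p * (1 - p))) n + A * √(log n) ≤ k := Nat.le_ceil _
  have hk0 : k ≠ 0 := (Nat.ceil_pos.2 (by positivity)).ne'
  have hn_le : n ≤ exp (k * meanSurprisal p) := by
    rw [← log_le_iff_le_exp hn0, ← div_le_iff₀ (meanSurprisal_pos hp)]
    exact (le_add_of_nonneg_right (by positivity)).trans hk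
  calc ν.real {ω | logb (1 / √(p * (1 - p))) n + A * √(log n) ≤ fillupLevel α ω n}
      ≤ ν.real {ω | 2 * (α / 2) ≤ fracFilled ω n k} := by
        refine measureReal_mono fun ω hω => ?_
        rw [Set.mem_ofPred_eq, mul_div_cancel₀ α two_ne_zero, ← le_fillupLevel_iff hα hk0]
        exact Nat.ceil_le.2 hω
    _ ≤ exp (-(α / 2 / 2 * 2 ^ k)) :=
        hν.measureReal_le_fracFilled_le (card_compl_typicalWords_le hδ.le k) (hrare n k hn hk)
    _ ≤ C / n := hdecay n k hn0 hn_le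

theorem exists_fillupLevel_lower_tail (hν : IIDBits p ν) (hp : p ∈ Set.Ioo 0 1) (hα : 0 < α)
    (hα1 : α < 1) :
    ∃ A > 0, ∃ C > 0, ∀ n : ℕ, 2 ≤ n →
      ν.real {ω | fillupLevel α ω n ≤ logb (1 / √(p * (1 - p))) n - A * √(log n)} ≤ C / n := by
  have := hν.1
  have hδ : 0 < 1 - α := sub_pos.2 hα1
  obtain ⟨A, hA, hfreq⟩ := exists_forall_two_pow_le_and_le_mul_wordProb hp hδ
  refine ⟨A, hA, exp 1, exp_pos 1, fun n hn => ?_⟩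
  have hn0 : (0 : ℝ) < n := by positivity
  set x := logb (1 / √(p * (1 - p))) n - A * √(log n)
  rcases lt_or_ge x 0 with hneg | hnonneg
  · have hempty : {ω | fillupLevel α ω n ≤ x} = ∅ :=
      Set.eq_empty_of_forall_notMem fun ω hω => (hneg.trans_le (Nat.cast_nonneg _)).not_ge hω
    rw [hempty, measureReal_empty]
    positivity
  have hk : (⌊x⌋₊ + 1 : ℕ) ≤ x + 1 := by
    push_cast
    gcongr
    exact Nat.floor_le hnonneg
  obtain ⟨hpow, hword⟩ := hfreq n _ hn hk
  calc ν.real {ω | fillupLevel α ω n ≤ x}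
      ≤ ν.real {ω | fracFilled ω n (⌊x⌋₊ + 1) < 1 - (1 - α)} := by
        refine measureReal_mono fun ω hω => ?_
        rw [Set.mem_ofPred_eq, sub_sub_cancel, ← not_le,
          ← le_fillupLevel_iff hα (Nat.succ_ne_zero _), not_le, Nat.lt_succ_iff]
        exact Nat.le_floor hω
    _ ≤ 2 ^ (⌊x⌋₊ + 1) * exp (1 - 4 * log n / 2) :=
        hν.measureReal_fracFilled_lt_le (card_compl_typicalWords_le hδ.le _) hword
    _ ≤ n * exp (1 - 4 * log n / 2) := by gcongr
    _ = exp 1 / n := by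
        rw [show 1 - 4 * log n / 2 = 1 - log n - log n by ring, exp_sub, exp_sub, exp_log hn0]
        field_simp

end IIDBits

/-- Lemma B of Janson–Szpankowski: a large-deviation estimate for the α-fillup level:
`P(|F_n(α) - log_{1/√(pq)} n| ≥ A √(ln n)) = O(1/n)`. -/
theorem fillupLevel_large_deviation
    (p q α : ℝ) (hp : 0 < p) (hp1 : p < 1) (hq : q = 1 - p) (hα : 0 < α) (hα1 : α < 1)
    (ν : Measure (ℕ → ℕ → Bool)) (hν : IIDBits p ν) :
    ∃ A > (0 : ℝ), ∃ C > (0 : ℝ), ∀ n : ℕ, 2 ≤ n →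
      ν {ω | A * Real.sqrt (Real.log n) ≤
          |(fillupLevel α ω n : ℝ) - Real.logb (1 / Real.sqrt (p * q)) n|} ≤
        ENNReal.ofReal (C / n) := by
  subst hq
  have := hν.1
  obtain ⟨A₁, hA₁, C₁, hC₁, hupper⟩ := hν.exists_fillupLevel_upper_tail ⟨hp, hp1⟩ hα
  obtain ⟨A₂, -, C₂, hC₂, hlower⟩ := hν.exists_fillupLevel_lower_tail ⟨hp, hp1⟩ hα hα1
  refine ⟨max A₁ A₂, by positivity, C₁ + C₂, by positivity, fun n hn => ?_⟩
  set L := logb (1 / √(p * (1 - p))) n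
  have hA₁_le : A₁ * √(log n) ≤ max A₁ A₂ * √(log n) := by gcongr; exact le_max_left _ _
  have hA₂_le : A₂ * √(log n) ≤ max A₁ A₂ * √(log n) := by gcongr; exact le_max_right _ _
  have hsub : {ω | max A₁ A₂ * √(log n) ≤ |fillupLevel α ω n - L|} ⊆
      {ω | L + A₁ * √(log n) ≤ fillupLevel α ω n} ∪
        {ω | fillupLevel α ω n ≤ L - A₂ * √(log n)} := fun ω hω => by
    simp only [Set.mem_union, Set.mem_ofPred_eq, le_abs] at hω ⊢
    exact hω.imp (fun _ => by linarith) (fun _ => by linarith)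
  rw [← ofReal_measureReal]
  apply ENNReal.ofReal_le_ofReal
  calc ν.real {ω | max A₁ A₂ * √(log n) ≤ |fillupLevel α ω n - L|}
      ≤ _ := (measureReal_mono hsub).trans (measureReal_union_le _ _)
    _ ≤ C₁ / n + C₂ / n := add_le_add (hupper n hn) (hlower n hn)
    _ = (C₁ + C₂) / n := (add_div _ _ _).symm
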